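/- For any source and any Huffman code H, the competitive advantage of any prefix code C over H is strictly less than 1/3; that is, P({x : l_C(x) < l_H(x)}) − P({x : l_C(x) > l_H(x)}) < 1/3. -/

import Mathlib

/-!
Scale the Kraft sums of the Huffman code to integers, so that a symbol of length `l x` weighs
`2 ^ (D - l x)`. Strong monotonicity alone gives `P(U) < 2 P(V)` as soon as a power of two separates
`K(U)` from `K(V)`, because a block of that weight containing `U` splits into two halves, each at
most as probable as `V`. Inside a block `T` this settles every pair `K(U) < K(V)` unless `U ∪ V`
fits in a half of `T`, to which one descends, or both sets weigh between a quarter and a half of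
`T`. In the latter case one removes a quarter from each and descends to the remaining half of `T`;
the recursion closes on a strengthening of `3 P(U) < 3 P(V) + P(T)` that compares the probability
of a quarter of `T` with that of a half.
-/

section DyadicWeight

variable {ι : Type*}

/-- The Kraft sum of a set of symbols, scaled to an integer: if the code has lengths `l ≤ D`, then
for the exponents `e x = D - l x` this is `2 ^ D` times the Kraft sum of `A`. -/
def dyadicWeight (e : ι → ℕ) (A : Finset ι) : ℕ := ∑ x ∈ A, 2 ^ e x

variable (e : ι → ℕ) {A B T : Finset ι} {j s : ℕ}

lemma dyadicWeight_mono (h : A ⊆ B) : dyadicWeight e A ≤ dyadicWeight e B :=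
  Finset.sum_le_sum_of_subset h

lemma dyadicWeight_sdiff_add [DecidableEq ι] (h : A ⊆ B) :
    dyadicWeight e (B \ A) + dyadicWeight e A = dyadicWeight e B :=
  Finset.sum_sdiff h

lemma dyadicWeight_union [DecidableEq ι] (h : Disjoint A B) :
    dyadicWeight e (A ∪ B) = dyadicWeight e A + dyadicWeight e B :=
  Finset.sum_union h

lemma two_pow_le_dyadicWeight {x : ι} (hx : x ∈ A) : 2 ^ e x ≤ dyadicWeight e A :=
  Finset.single_le_sum (f := fun x => 2 ^ e x) (fun _ _ => Nat.zero_le _) hx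

lemma dyadicWeight_pos : 0 < dyadicWeight e A ↔ A.Nonempty := by
  simp [dyadicWeight, Finset.sum_pos_iff, Finset.Nonempty]

variable {e}

lemma exponent_le_of_dyadicWeight_le (h : dyadicWeight e A ≤ 2 ^ j) : ∀ x ∈ A, e x ≤ j :=
  fun _ hx => (Nat.pow_le_pow_iff_right one_lt_two).1 ((two_pow_le_dyadicWeight e hx).trans h)

lemma exponent_le_of_dyadicWeight_lt (h : dyadicWeight e A < 2 ^ (j + 1)) : ∀ x ∈ A, e x ≤ j :=
  fun _ hx => Nat.lt_succ_iff.1 <|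
    (Nat.pow_lt_pow_iff_right one_lt_two).1 ((two_pow_le_dyadicWeight e hx).trans_lt h)

lemma exponent_le_of_ssubset (hAB : A ⊂ B) (hA : A.Nonempty)
    (hB : dyadicWeight e B ≤ 2 ^ (s + 1)) : ∀ x ∈ B, e x ≤ s := by
  classical
  intro x hx
  suffices 2 ^ e x < dyadicWeight e B from
    Nat.lt_succ_iff.1 ((Nat.pow_lt_pow_iff_right one_lt_two).1 (this.trans_le hB))
  have hsplit := dyadicWeight_sdiff_add e hAB.subset
  by_cases hxA : x ∈ A
  · have := two_pow_le_dyadicWeight e hxA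
    have := (dyadicWeight_pos e).2 (Finset.sdiff_nonempty.2 hAB.not_subset)
    omega
  · have := two_pow_le_dyadicWeight e (Finset.mem_sdiff.2 ⟨hx, hxA⟩)
    have := (dyadicWeight_pos e).2 hA
    omega

lemma exists_subset_dyadicWeight_eq {θ : ℕ} (hθ : θ ≤ dyadicWeight e A)
    (hdvd : ∀ x ∈ A, 2 ^ e x ∣ θ) : ∃ B ⊆ A, dyadicWeight e B = θ := by
  classical
  induction A using Finset.strongInduction with
  | H A ih =>
    obtain heq | hlt := hθ.eq_or_lt
    · exact ⟨A, subset_rfl, heq.symm⟩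
    -- The lightest symbol can be discarded: its weight divides the positive excess over `θ`.
    obtain ⟨x, hx, hmin⟩ := A.exists_min_image e ((dyadicWeight_pos e).1 (hlt.trans_le' θ.zero_le))
    have hdvdA : 2 ^ e x ∣ dyadicWeight e A :=
      Finset.dvd_sum fun y hy => pow_dvd_pow 2 (hmin y hy)
    have hle : 2 ^ e x ≤ dyadicWeight e A - θ :=
      Nat.le_of_dvd (by omega) (Nat.dvd_sub hdvdA (hdvd x hx))
    have herase : dyadicWeight e (A.erase x) + 2 ^ e x = dyadicWeight e A :=
      A.sum_erase_add (fun x => 2 ^ e x) hx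
    obtain ⟨B, hBA, hB⟩ := ih (A.erase x) (Finset.erase_ssubset hx) (by omega)
      fun y hy => hdvd y (Finset.mem_of_mem_erase hy)
    exact ⟨B, hBA.trans (A.erase_subset x), hB⟩

lemma exists_subset_dyadicWeight_eq_two_pow (hj : 2 ^ j ≤ dyadicWeight e A)
    (he : ∀ x ∈ A, e x ≤ j) : ∃ B ⊆ A, dyadicWeight e B = 2 ^ j :=
  exists_subset_dyadicWeight_eq hj fun x hx => pow_dvd_pow 2 (he x hx)

lemma two_pow_dvd_dyadicWeight_filter (hT : 2 ^ j ∣ dyadicWeight e T) :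
    2 ^ j ∣ dyadicWeight e {x ∈ T | e x ≤ j} := by
  have hheavy : 2 ^ j ∣ dyadicWeight e {x ∈ T | ¬ e x ≤ j} :=
    Finset.dvd_sum fun x hx => pow_dvd_pow 2 (not_le.1 (Finset.mem_filter.1 hx).2).le
  refine (Nat.dvd_add_left hheavy).1 ?_
  rwa [dyadicWeight, dyadicWeight, Finset.sum_filter_add_sum_filter_not]

lemma exists_superset_dyadicWeight_eq_two_pow (hAT : A ⊆ T) (hA : A.Nonempty)
    (hAj : dyadicWeight e A ≤ 2 ^ j) (hT : 2 ^ j ∣ dyadicWeight e T) :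
    ∃ B, A ⊆ B ∧ B ⊆ T ∧ dyadicWeight e B = 2 ^ j := by
  classical
  set S : Finset ι := {x ∈ T | e x ≤ j}
  have hAS : A ⊆ S := fun x hx =>
    Finset.mem_filter.2 ⟨hAT hx, exponent_le_of_dyadicWeight_le hAj x hx⟩
  have hdvdS : 2 ^ j ∣ dyadicWeight e S := two_pow_dvd_dyadicWeight_filter hT
  have hleS : 2 ^ j ≤ dyadicWeight e S := Nat.le_of_dvd ((dyadicWeight_pos e).2 (hA.mono hAS)) hdvdS
  have hsplitA := dyadicWeight_sdiff_add e hAS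
  obtain ⟨C, hCSA, hC⟩ : ∃ C ⊆ S \ A, dyadicWeight e C = dyadicWeight e S - 2 ^ j :=
    exists_subset_dyadicWeight_eq (by omega) fun x hx =>
      (pow_dvd_pow 2 (Finset.mem_filter.1 (Finset.mem_sdiff.1 hx).1).2).trans
        (Nat.dvd_sub hdvdS dvd_rfl)
  have hsplitC := dyadicWeight_sdiff_add e (hCSA.trans Finset.sdiff_subset)
  exact ⟨S \ C, Finset.subset_sdiff.2 ⟨hAS, (Finset.subset_sdiff.1 hCSA).2.symm⟩,
    Finset.sdiff_subset.trans (Finset.filter_subset _ _), by omega⟩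

end DyadicWeight

section Exchange

variable {ι R : Type*} [CommRing R] [LinearOrder R] [IsStrictOrderedRing R]

lemma exists_light_heavy_halves (p : ι → R) {e : ι → ℕ} {B : Finset ι} {s : ℕ}
    (hB : dyadicWeight e B = 2 ^ (s + 1)) (he : ∀ x ∈ B, e x ≤ s) :
    ∃ C ⊆ B, ∃ D ⊆ B, dyadicWeight e C = 2 ^ s ∧ dyadicWeight e D = 2 ^ s ∧
      2 * ∑ x ∈ C, p x ≤ ∑ x ∈ B, p x ∧ ∑ x ∈ B, p x ≤ 2 * ∑ x ∈ D, p x := by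
  classical
  rw [pow_succ] at hB
  obtain ⟨C, hCB, hC⟩ := exists_subset_dyadicWeight_eq_two_pow (by omega) he
  have hweight := dyadicWeight_sdiff_add e hCB
  have hsum := Finset.sum_sdiff (f := p) hCB
  have hC' : dyadicWeight e (B \ C) = 2 ^ s := by omega
  obtain h | h := le_total (∑ x ∈ C, p x) (∑ x ∈ B \ C, p x)
  · exact ⟨C, hCB, B \ C, Finset.sdiff_subset, hC, hC', by linarith, by linarith⟩
  · exact ⟨B \ C, Finset.sdiff_subset, C, hCB, hC', hC, by linarith, by linarith⟩

/-- Strong monotonicity expressed through scaled Kraft sums: among the sets whose weight is a power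
of two, strictly heavier sets are at least as probable. -/
def DyadicMonotone (e : ι → ℕ) (p : ι → R) : Prop :=
  ∀ ⦃X Y : Finset ι⦄ ⦃a b : ℕ⦄, dyadicWeight e X = 2 ^ a → dyadicWeight e Y = 2 ^ b → b < a →
    ∑ x ∈ Y, p x ≤ ∑ x ∈ X, p x

/-- The strengthening of `3 P(U) < 3 P(V) + P(T)` that is stable under removing a quarter of the
block `T` from each of `U` and `V`. The set `A` is meant to be a quarter of `T`, and `Z` a half. -/
def HasExchange (e : ι → ℕ) (p : ι → R) (s : ℕ) (T U V : Finset ι) : Prop :=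
  ∃ A ⊆ T, ∃ Z ⊆ T, dyadicWeight e A = 2 ^ s ∧ dyadicWeight e Z = 2 ^ (s + 1) ∧
    3 * ∑ x ∈ U, p x + 2 * ∑ x ∈ Z, p x < 2 * ∑ x ∈ A, p x + 3 * ∑ x ∈ V, p x + ∑ x ∈ T, p x

variable {e : ι → ℕ} {p : ι → R} {T U V : Finset ι} {j s : ℕ}

lemma HasExchange.three_mul_sum_lt (hmono : DyadicMonotone e p) (h : HasExchange e p s T U V) :
    3 * ∑ x ∈ U, p x < 3 * ∑ x ∈ V, p x + ∑ x ∈ T, p x := by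
  obtain ⟨A, -, Z, -, hA, hZ, hlt⟩ := h
  linarith [hmono hZ hA s.lt_succ_self]

lemma HasExchange.of_sdiff [DecidableEq ι] (hmono : DyadicMonotone e p) (hUT : U ⊆ T) (hVT : V ⊆ T)
    (hUV : Disjoint U V) {u v : Finset ι} (hu : u ⊆ U) (hv : v ⊆ V)
    (hu_weight : dyadicWeight e u = 2 ^ (s + 1)) (hv_weight : dyadicWeight e v = 2 ^ (s + 1))
    (h : HasExchange e p s (T \ (u ∪ v)) (U \ u) (V \ v)) : HasExchange e p (s + 1) T U V := by
  obtain ⟨A, -, Z, hZT, hA, hZ, hlt⟩ := h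
  have hvZ : Disjoint v Z :=
    ((Finset.subset_sdiff.1 hZT).2.mono_right Finset.subset_union_right).symm
  refine ⟨u, hu.trans hUT, v ∪ Z, Finset.union_subset (hv.trans hVT)
    (hZT.trans Finset.sdiff_subset), hu_weight, ?_, ?_⟩
  · rw [dyadicWeight_union e hvZ, hv_weight, hZ, pow_succ 2 (s + 1), mul_two]
  · have hAv : ∑ x ∈ A, p x ≤ ∑ x ∈ v, p x := hmono hv_weight hA s.lt_succ_self
    have hsplitU := Finset.sum_sdiff (f := p) hu
    have hsplitV := Finset.sum_sdiff (f := p) hv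
    have hsplitT :=
      Finset.sum_sdiff (f := p) (Finset.union_subset (hu.trans hUT) (hv.trans hVT))
    rw [Finset.sum_union (hUV.mono hu hv)] at hsplitT
    rw [Finset.sum_union hvZ]
    linarith

lemma HasExchange.of_subset_half {H : Finset ι} (hT : dyadicWeight e T = 2 ^ (s + 2))
    (hHT : H ⊆ T) (hH : dyadicWeight e H = 2 ^ (s + 1)) (hHs : ∀ x ∈ H, e x ≤ s)
    (hTs : ∀ x ∈ T, e x ≤ s + 1)
    (h : 3 * ∑ x ∈ U, p x < 3 * ∑ x ∈ V, p x + ∑ x ∈ H, p x) : HasExchange e p s T U V := by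
  obtain ⟨-, -, A, hAH, -, hA, -, hA_heavy⟩ := exists_light_heavy_halves p hH hHs
  obtain ⟨Z, hZT, -, -, hZ, -, hZ_light, -⟩ := exists_light_heavy_halves p hT hTs
  exact ⟨A, hAH.trans hHT, Z, hZT, hA, hZ, by linarith⟩

namespace DyadicMonotone

lemma sum_le_of_two_pow_le (hp : ∀ i, 0 ≤ p i) (hmono : DyadicMonotone e p)
    (hU : dyadicWeight e U = 2 ^ j) (hV : 2 ^ (j + 1) ≤ dyadicWeight e V) :
    ∑ x ∈ U, p x ≤ ∑ x ∈ V, p x := by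
  obtain ⟨v, hvV, k, hjk, hv⟩ : ∃ v ⊆ V, ∃ k, j < k ∧ dyadicWeight e v = 2 ^ k := by
    by_cases he : ∀ x ∈ V, e x ≤ j + 1
    · obtain ⟨v, hvV, hv⟩ := exists_subset_dyadicWeight_eq_two_pow hV he
      exact ⟨v, hvV, j + 1, j.lt_succ_self, hv⟩
    · push Not at he
      obtain ⟨x, hxV, hx⟩ := he
      exact ⟨{x}, Finset.singleton_subset_iff.2 hxV, e x, by omega, by simp [dyadicWeight]⟩
  exact (hmono hv hU hjk).trans (Finset.sum_le_sum_of_subset_of_nonneg hvV fun i _ _ => hp i)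

lemma sum_lt_two_mul_sum (hp : ∀ i, 0 < p i) (hmono : DyadicMonotone e p) (hUT : U ⊆ T)
    (hT : 2 ^ j ∣ dyadicWeight e T) (hU : dyadicWeight e U < 2 ^ j)
    (hV : 2 ^ j ≤ dyadicWeight e V) : ∑ x ∈ U, p x < 2 * ∑ x ∈ V, p x := by
  obtain rfl | hUne := U.eq_empty_or_nonempty
  · have : 0 < ∑ x ∈ V, p x :=
      Finset.sum_pos (fun i _ => hp i) ((dyadicWeight_pos e).1 ((Nat.two_pow_pos j).trans_le hV))
    simpa using this
  obtain ⟨B, hUB, -, hB⟩ := exists_superset_dyadicWeight_eq_two_pow hUT hUne hU.le hT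
  have hUB' : U ⊂ B := hUB.ssubset_of_ne (by rintro rfl; omega)
  have hUpos := (dyadicWeight_pos e).2 hUne
  obtain ⟨i, rfl⟩ : ∃ i, j = i + 1 :=
    Nat.exists_eq_succ_of_ne_zero (by rintro rfl; omega)
  obtain ⟨-, -, D, -, -, hD, -, hBD⟩ :=
    exists_light_heavy_halves p hB (exponent_le_of_ssubset hUB' hUne hB.le)
  calc ∑ x ∈ U, p x < ∑ x ∈ B, p x := by
        obtain ⟨x, hxB, hxU⟩ := Finset.exists_of_ssubset hUB'
        exact Finset.sum_lt_sum_of_subset hUB hxB hxU (hp x) fun i _ _ => (hp i).le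
    _ ≤ 2 * ∑ x ∈ D, p x := hBD
    _ ≤ 2 * ∑ x ∈ V, p x := by
        have := hmono.sum_le_of_two_pow_le (fun i => (hp i).le) hD hV
        linarith

lemma three_mul_sum_lt_of_half_le (hp : ∀ i, 0 < p i) (hmono : DyadicMonotone e p)
    (hdvd : 2 ^ j ∣ dyadicWeight e T) (hT : dyadicWeight e T ≤ 2 ^ (j + 1)) (hUT : U ⊆ T)
    (hVT : V ⊆ T) (hUV : Disjoint U V) (hlt : dyadicWeight e U < dyadicWeight e V)
    (hV : 2 ^ j ≤ dyadicWeight e V) :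
    3 * ∑ x ∈ U, p x < 3 * ∑ x ∈ V, p x + ∑ x ∈ T, p x := by
  classical
  have hweight := dyadicWeight_mono e (Finset.union_subset hUT hVT)
  have hsum := Finset.sum_le_sum_of_subset_of_nonneg (f := p) (Finset.union_subset hUT hVT)
    fun i _ _ => (hp i).le
  rw [dyadicWeight_union e hUV] at hweight
  rw [Finset.sum_union hUV] at hsum
  have := hmono.sum_lt_two_mul_sum hp hUT hdvd (by omega) hV
  linarith

lemma three_mul_sum_lt_of_hasExchange (hp : ∀ i, 0 < p i) (hmono : DyadicMonotone e p)
    (hT : dyadicWeight e T = 2 ^ s) (hUT : U ⊆ T) (hVT : V ⊆ T) (hUV : Disjoint U V)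
    (hlt : dyadicWeight e U < dyadicWeight e V)
    (h : ∀ i, s = i + 2 → dyadicWeight e V < 2 ^ (i + 1) → HasExchange e p i T U V) :
    3 * ∑ x ∈ U, p x < 3 * ∑ x ∈ V, p x + ∑ x ∈ T, p x := by
  -- For `s = 0` the truncated bound `2 ^ (s - 1) = 1` holds because `V` is nonempty.
  by_cases hV : 2 ^ (s - 1) ≤ dyadicWeight e V
  · exact hmono.three_mul_sum_lt_of_half_le hp (hT ▸ pow_dvd_pow 2 (by omega))
      (hT.le.trans (Nat.pow_le_pow_right two_pos (by omega))) hUT hVT hUV hlt hV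
  · obtain ⟨i, rfl⟩ : ∃ i, s = i + 2 := by
      match s with
      | 0 | 1 => simp at hV; omega
      | i + 2 => exact ⟨i, rfl⟩
    exact (h i rfl (not_le.1 hV)).three_mul_sum_lt hmono

lemma hasExchange_of_lt_quarter (hp : ∀ i, 0 < p i) (hmono : DyadicMonotone e p)
    (hT : dyadicWeight e T = 2 ^ (s + 2)) (hTs : ∀ x ∈ T, e x ≤ s + 1) (hUT : U ⊆ T)
    (hUne : U.Nonempty) (hU : dyadicWeight e U < 2 ^ s) (hV : 2 ^ s ≤ dyadicWeight e V) :
    HasExchange e p s T U V := by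
  have hdvd : 2 ^ s ∣ dyadicWeight e T := hT ▸ pow_dvd_pow 2 (by omega)
  obtain ⟨A, hUA, hAT, hA⟩ := exists_superset_dyadicWeight_eq_two_pow hUT hUne hU.le hdvd
  obtain ⟨Z, hZT, -, -, hZ, -, hZ_light, -⟩ := exists_light_heavy_halves p hT hTs
  have hUA_sum : ∑ x ∈ U, p x ≤ ∑ x ∈ A, p x :=
    Finset.sum_le_sum_of_subset_of_nonneg hUA fun i _ _ => (hp i).le
  have hUV_sum := hmono.sum_lt_two_mul_sum hp hUT hdvd hU hV
  have hV_nonneg : 0 ≤ ∑ x ∈ V, p x := Finset.sum_nonneg fun i _ => (hp i).le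
  exact ⟨A, hAT, Z, hZT, hA, hZ, by linarith⟩

lemma hasExchange_succ_of_quarter_le (hmono : DyadicMonotone e p)
    (hT : dyadicWeight e T = 2 ^ (s + 3)) (hUT : U ⊆ T) (hVT : V ⊆ T) (hUV : Disjoint U V)
    (hlt : dyadicWeight e U < dyadicWeight e V) (hV : dyadicWeight e V < 2 ^ (s + 2))
    (hU : 2 ^ (s + 1) ≤ dyadicWeight e U)
    (ih : ∀ {T' U' V' : Finset ι}, dyadicWeight e T' = 2 ^ (s + 2) → U' ⊆ T' → V' ⊆ T' →
      Disjoint U' V' → dyadicWeight e U' < dyadicWeight e V' → dyadicWeight e V' < 2 ^ (s + 1) →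
      HasExchange e p s T' U' V') :
    HasExchange e p (s + 1) T U V := by
  classical
  obtain ⟨u, huU, hu⟩ := exists_subset_dyadicWeight_eq_two_pow hU
    (exponent_le_of_dyadicWeight_lt (hlt.trans hV))
  obtain ⟨v, hvV, hv⟩ := exists_subset_dyadicWeight_eq_two_pow (hU.trans hlt.le)
    (exponent_le_of_dyadicWeight_lt hV)
  have hT_weight := dyadicWeight_sdiff_add e
    (Finset.union_subset (huU.trans hUT) (hvV.trans hVT))
  have hU_weight := dyadicWeight_sdiff_add e huU
  have hV_weight := dyadicWeight_sdiff_add e hvV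
  rw [dyadicWeight_union e (hUV.mono huU hvV)] at hT_weight
  have hU_sub : U \ u ⊆ T \ (u ∪ v) := by
    rw [Finset.subset_sdiff, Finset.disjoint_union_right]
    exact ⟨Finset.sdiff_subset.trans hUT, Finset.sdiff_disjoint, hUV.mono Finset.sdiff_subset hvV⟩
  have hV_sub : V \ v ⊆ T \ (u ∪ v) := by
    rw [Finset.subset_sdiff, Finset.disjoint_union_right]
    exact ⟨Finset.sdiff_subset.trans hVT, (hUV.mono huU Finset.sdiff_subset).symm,
      Finset.sdiff_disjoint⟩
  have hhalf : 2 ^ (s + 2) = 2 * 2 ^ (s + 1) := pow_succ' 2 (s + 1)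
  have hblock : 2 ^ (s + 3) = 2 * 2 ^ (s + 2) := pow_succ' 2 (s + 2)
  exact .of_sdiff hmono hUT hVT hUV huU hvV hu hv <| ih (by omega) hU_sub hV_sub
    (hUV.mono Finset.sdiff_subset Finset.sdiff_subset) (by omega) (by omega)

theorem hasExchange (hp : ∀ i, 0 < p i) (hmono : DyadicMonotone e p)
    (hT : dyadicWeight e T = 2 ^ (s + 2)) (hUT : U ⊆ T) (hVT : V ⊆ T) (hUV : Disjoint U V)
    (hlt : dyadicWeight e U < dyadicWeight e V) (hV : dyadicWeight e V < 2 ^ (s + 1)) :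
    HasExchange e p s T U V := by
  classical
  induction s using Nat.strong_induction_on generalizing T U V with
  | _ s ih =>
  have hVne : V.Nonempty := (dyadicWeight_pos e).1 (hlt.trans_le' (Nat.zero_le _))
  have hblock : 2 ^ (s + 2) = 2 * 2 ^ (s + 1) := pow_succ' 2 (s + 1)
  have hTs : ∀ x ∈ T, e x ≤ s + 1 :=
    exponent_le_of_ssubset (hVT.ssubset_of_ne (by rintro rfl; omega)) hVne hT.le
  by_cases hfit : dyadicWeight e (U ∪ V) ≤ 2 ^ (s + 1)
  · obtain ⟨H, hUVH, hHT, hH⟩ := exists_superset_dyadicWeight_eq_two_pow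
      (Finset.union_subset hUT hVT) (hVne.mono Finset.subset_union_right) hfit
      (hT ▸ pow_dvd_pow 2 (by omega))
    obtain ⟨hUH, hVH⟩ := Finset.union_subset_iff.1 hUVH
    have hHs : ∀ x ∈ H, e x ≤ s :=
      exponent_le_of_ssubset (hVH.ssubset_of_ne (by rintro rfl; omega)) hVne hH.le
    refine .of_subset_half hT hHT hH hHs hTs <|
      hmono.three_mul_sum_lt_of_hasExchange hp hH hUH hVH hUV hlt fun i hi hVi => ?_
    exact ih i (by omega) (hi ▸ hH) hUH hVH hUV hlt hVi
  rw [dyadicWeight_union e hUV] at hfit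
  by_cases hU : dyadicWeight e U < 2 ^ s
  · exact hmono.hasExchange_of_lt_quarter hp hT hTs hUT ((dyadicWeight_pos e).1 (by omega)) hU
      (by omega)
  cases s with
  | zero => omega
  | succ i =>
    exact hmono.hasExchange_succ_of_quarter_le hT hUT hVT hUV hlt hV (not_lt.1 hU) (ih i (by omega))

theorem three_mul_sum_lt (hp : ∀ i, 0 < p i) (hmono : DyadicMonotone e p)
    (hT : dyadicWeight e T = 2 ^ s) (hUT : U ⊆ T) (hVT : V ⊆ T) (hUV : Disjoint U V)
    (hlt : dyadicWeight e U < dyadicWeight e V) :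
    3 * ∑ x ∈ U, p x < 3 * ∑ x ∈ V, p x + ∑ x ∈ T, p x :=
  hmono.three_mul_sum_lt_of_hasExchange hp hT hUT hVT hUV hlt fun _ hs hV =>
    hmono.hasExchange hp (hs ▸ hT) hUT hVT hUV hlt hV

end DyadicMonotone

end Exchange

section KraftSum

variable {ι 𝕜 : Type*} [Field 𝕜]

section Scaling

variable [NeZero (2 : 𝕜)]

lemma two_pow_mul_half_pow {m D : ℕ} (h : m ≤ D) : (2 : 𝕜) ^ D * (1 / 2) ^ m = 2 ^ (D - m) := by
  rw [pow_sub₀ _ two_ne_zero h, one_div, inv_pow]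

lemma cast_dyadicWeight_sub {l : ι → ℕ} {D : ℕ} (hl : ∀ i, l i ≤ D) (A : Finset ι) :
    (dyadicWeight (fun i => D - l i) A : 𝕜) = 2 ^ D * ∑ x ∈ A, (1 / 2) ^ l x := by
  simp only [dyadicWeight, Nat.cast_sum, Nat.cast_pow, Nat.cast_ofNat, Finset.mul_sum,
    two_pow_mul_half_pow (hl _)]

lemma sum_half_pow_of_dyadicWeight_sub {l : ι → ℕ} {D a : ℕ} {A : Finset ι} (hl : ∀ i, l i ≤ D)
    (ha : a ≤ D) (h : dyadicWeight (fun i => D - l i) A = 2 ^ a) :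
    ∑ x ∈ A, ((1 : 𝕜) / 2) ^ l x = (1 / 2) ^ (D - a) := by
  refine mul_left_cancel₀ (pow_ne_zero D (two_ne_zero (α := 𝕜))) ?_
  rw [← cast_dyadicWeight_sub hl, h, two_pow_mul_half_pow (D.sub_le a), Nat.sub_sub_self ha]
  norm_cast

end Scaling

variable [LinearOrder 𝕜]

/-- Strong monotonicity of the code with lengths `l` for the source `p`: among the sets whose Kraft
sum is a power of `1 / 2`, those with the larger Kraft sum are at least as probable. -/
def StronglyMonotone (l : ι → ℕ) (p : ι → 𝕜) : Prop :=
  ∀ (X Y : Finset ι) (a b : ℕ), ∑ x ∈ X, ((1 : 𝕜) / 2) ^ l x = (1 / 2) ^ a →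
    ∑ x ∈ Y, ((1 : 𝕜) / 2) ^ l x = (1 / 2) ^ b → a < b → ∑ x ∈ Y, p x ≤ ∑ x ∈ X, p x

variable [IsStrictOrderedRing 𝕜] [Fintype ι]

lemma StronglyMonotone.dyadicMonotone {l : ι → ℕ} {p : ι → 𝕜} {D : ℕ} (h : StronglyMonotone l p)
    (hl : ∀ i, l i ≤ D) (huniv : dyadicWeight (fun i => D - l i) Finset.univ = 2 ^ D) :
    DyadicMonotone (fun i => D - l i) p := by
  have hle {A : Finset ι} {a : ℕ} (hA : dyadicWeight (fun i => D - l i) A = 2 ^ a) : a ≤ D :=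
    (Nat.pow_le_pow_iff_right one_lt_two).1 <|
      hA ▸ huniv ▸ dyadicWeight_mono _ (Finset.subset_univ A)
  intro X Y a b hX hY hba
  refine h X Y (D - a) (D - b) (sum_half_pow_of_dyadicWeight_sub hl (hle hX) hX)
    (sum_half_pow_of_dyadicWeight_sub hl (hle hY) hY) ?_
  have := hle hX
  omega

theorem three_mul_sum_lt_of_kraftSum_lt {l : ι → ℕ} {p : ι → 𝕜} (hp : ∀ i, 0 < p i)
    (hcomplete : ∑ i, ((1 : 𝕜) / 2) ^ l i = 1) (hmono : StronglyMonotone l p) {U V : Finset ι}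
    (hUV : Disjoint U V) (hlt : ∑ x ∈ U, ((1 : 𝕜) / 2) ^ l x < ∑ x ∈ V, (1 / 2) ^ l x) :
    3 * ∑ x ∈ U, p x < 3 * ∑ x ∈ V, p x + ∑ x, p x := by
  obtain ⟨D, hl⟩ : ∃ D, ∀ i, l i ≤ D :=
    ⟨Finset.univ.sup l, fun i => Finset.le_sup (Finset.mem_univ i)⟩
  have huniv : dyadicWeight (fun i => D - l i) Finset.univ = 2 ^ D := by
    have := cast_dyadicWeight_sub (𝕜 := 𝕜) hl Finset.univ
    rw [hcomplete, mul_one] at this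
    exact_mod_cast this
  refine (hmono.dyadicMonotone hl huniv).three_mul_sum_lt hp huniv (Finset.subset_univ U)
    (Finset.subset_univ V) hUV ?_
  rw [← Nat.cast_lt (α := 𝕜), cast_dyadicWeight_sub hl, cast_dyadicWeight_sub hl]
  gcongr

/-- Shortening a codeword at least doubles its share of the Kraft sum, so for a code `l'` obeying
the Kraft inequality the symbols it shortens must be paid for by those it lengthens. -/
lemma kraftSum_win_add_le_kraftSum_loss {l l' : ι → ℕ}
    (h : ∑ i, ((1 : 𝕜) / 2) ^ l' i ≤ ∑ i, (1 / 2) ^ l i) :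
    ∑ i with l' i < l i, ((1 : 𝕜) / 2) ^ l i + ∑ i with l i < l' i, (1 / 2) ^ l' i ≤
      ∑ i with l i < l' i, (1 / 2) ^ l i := by
  have hpointwise (i : ι) :
      (1 / 2) ^ l i + (if l' i < l i then ((1 : 𝕜) / 2) ^ l i else 0) +
        (if l i < l' i then ((1 : 𝕜) / 2) ^ l' i else 0) ≤
      (1 / 2) ^ l' i + if l i < l' i then ((1 : 𝕜) / 2) ^ l i else 0 := by
    obtain hwin | heq | hloss := lt_trichotomy (l' i) (l i)
    · have hdouble : ((1 : 𝕜) / 2) ^ l i ≤ (1 / 2) ^ (l' i + 1) :=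
        pow_le_pow_of_le_one (by norm_num) (by norm_num) hwin
      rw [pow_succ] at hdouble
      simp only [hwin, hwin.not_gt, if_true, if_false]
      linarith
    · simp [heq]
    · simp only [hloss, hloss.not_gt, if_true, if_false]
      linarith
  have hsum := Finset.sum_le_sum fun i (_ : i ∈ Finset.univ) => hpointwise i
  simp only [Finset.sum_add_distrib, ← Finset.sum_filter] at hsum
  linarith

theorem advantage_lt_one_third_general {p : ι → 𝕜} (hpos : ∀ i, 0 < p i) (hsum : ∑ i, p i = 1)
    {lH : ι → ℕ} (hcomplete : ∑ i, ((1 : 𝕜) / 2) ^ lH i = 1) (hsm : StronglyMonotone lH p)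
    {lC : ι → ℕ} (hCkraft : ∑ i, ((1 : 𝕜) / 2) ^ lC i ≤ 1) :
    ∑ i with lC i < lH i, p i - ∑ i with lH i < lC i, p i < 1 / 3 := by
  set W : Finset ι := {i | lC i < lH i}
  set L : Finset ι := {i | lH i < lC i}
  have hkraft : ∑ i ∈ W, ((1 : 𝕜) / 2) ^ lH i + ∑ i ∈ L, (1 / 2) ^ lC i ≤ ∑ i ∈ L, (1 / 2) ^ lH i :=
    kraftSum_win_add_le_kraftSum_loss (hCkraft.trans hcomplete.ge)
  obtain hL | hL := L.eq_empty_or_nonempty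
  · have hW : W = ∅ := by
      by_contra! hW
      have : 0 < ∑ i ∈ W, ((1 : 𝕜) / 2) ^ lH i := Finset.sum_pos (fun _ _ => by positivity) hW
      simp only [hL, Finset.sum_empty] at hkraft
      linarith
    simp [hW, hL]
  · have hLpos : 0 < ∑ i ∈ L, ((1 : 𝕜) / 2) ^ lC i := Finset.sum_pos (fun _ _ => by positivity) hL
    have hWL : Disjoint W L := Finset.disjoint_filter.2 fun _ _ hwin => hwin.not_gt
    have := three_mul_sum_lt_of_kraftSum_lt hpos hcomplete hsm hWL (by linarith)
    linarith

end KraftSum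

/-- The competitive advantage of any prefix code C over a Huffman code H
(complete, strongly monotone, expected-length optimal) is strictly less
than 1/3. -/
theorem advantage_lt_one_third (n : ℕ) (p : Fin n → ℝ)
    (hpos : ∀ i, 0 < p i) (hsum : ∑ i, p i = 1)
    (lH : Fin n → ℕ)
    (hcomplete : ∑ i, ((1:ℝ)/2) ^ (lH i) = 1)
    (hsm : ∀ (X Y : Finset (Fin n)) (a b : ℕ),
      (∑ x ∈ X, ((1:ℝ)/2) ^ (lH x)) = ((1:ℝ)/2) ^ a →
      (∑ x ∈ Y, ((1:ℝ)/2) ^ (lH x)) = ((1:ℝ)/2) ^ b →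
      a < b → ∑ x ∈ Y, p x ≤ ∑ x ∈ X, p x)
    (hopt : ∀ l' : Fin n → ℕ, (∑ i, ((1:ℝ)/2) ^ (l' i) ≤ 1) →
      ∑ i, p i * lH i ≤ ∑ i, p i * l' i)
    (lC : Fin n → ℕ) (hCkraft : ∑ i, ((1:ℝ)/2) ^ (lC i) ≤ 1) :
    (∑ i ∈ Finset.univ.filter (fun i => lC i < lH i), p i)
      - (∑ i ∈ Finset.univ.filter (fun i => lH i < lC i), p i) < 1/3 :=
  advantage_lt_one_third_general hpos hsum hcomplete hsm hCkraft
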